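/- If f : [a,b] → ℝ is strongly convex with modulus C > 0, i.e. the function x ↦ f(x) − (C/2)x² is convex on [a,b], then for all x, y, z ∈ [a,b]: (f(x)+f(y)+f(z))/3 + f((x+y+z)/3) − (2/3)·(f((x+y)/2) + f((y+z)/2) + f((z+x)/2)) ≥ (C/36)·((x−y)² + (y−z)² + (z−x)²). -/

import Mathlib

/-- If `u`, `v` lie on the segment from `m` to `w` and have the same mean as `m, m, m, w`, then
convexity bounds `g u + g v` by the corresponding chord value. -/
theorem ConvexOn.add_le_of_mem_segment {s : Set ℝ} {g : ℝ → ℝ} (hg : ConvexOn ℝ s g)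
    {m w u v : ℝ} (hm : m ∈ s) (hw : w ∈ s) (hu : u ∈ segment ℝ m w) (hv : v ∈ segment ℝ m w)
    (huv : u + v = (w + 3 * m) / 2) : g u + g v ≤ (g w + 3 * g m) / 2 := by
  rcases eq_or_ne m w with rfl | hne
  · rw [segment_same, Set.mem_singleton_iff] at hu hv
    subst hu hv
    linarith
  obtain ⟨p, q, hp, hq, hpq, rfl⟩ := hu
  obtain ⟨p', q', hp', hq', hpq', rfl⟩ := hv
  have h := hg.2 hm hw hp hq hpq
  have h' := hg.2 hm hw hp' hq' hpq'
  simp only [smul_eq_mul] at h h' huv ⊢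
  obtain rfl : p = 1 - q := by linarith
  obtain rfl : p' = 1 - q' := by linarith
  have hsum : q + q' = 1 / 2 := by
    apply mul_right_cancel₀ (sub_ne_zero.mpr hne.symm)
    linear_combination huv
  obtain rfl : q' = 1 / 2 - q := by linarith
  linarith

theorem ConvexOn.map_midpoint_le {s : Set ℝ} {g : ℝ → ℝ} (hg : ConvexOn ℝ s g)
    {x y : ℝ} (hx : x ∈ s) (hy : y ∈ s) : g ((x + y) / 2) ≤ (g x + g y) / 2 := by
  have h := hg.2 hx hy one_half_pos.le one_half_pos.le (add_halves 1)
  simp only [smul_eq_mul] at h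
  rw [show (x + y) / 2 = 1 / 2 * x + 1 / 2 * y by ring]
  linarith

theorem ConvexOn.popoviciu_of_le {s : Set ℝ} {g : ℝ → ℝ} (hg : ConvexOn ℝ s g)
    {x y z : ℝ} (hx : x ∈ s) (hz : z ∈ s) (hxy : x ≤ y) (hyz : y ≤ z) :
    2 * (g ((x + y) / 2) + g ((y + z) / 2) + g ((z + x) / 2)) ≤
      g x + g y + g z + 3 * g ((x + y + z) / 3) := by
  have mem {t : ℝ} (h₁ : x ≤ t) (h₂ : t ≤ z) : t ∈ s := hg.1.ordConnected.out hx hz ⟨h₁, h₂⟩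
  have hy : y ∈ s := mem hxy hyz
  have hm : (x + y + z) / 3 ∈ s := mem (by linarith) (by linarith)
  rcases le_total y ((x + y + z) / 3) with h | h
  · have hchord := hg.add_le_of_mem_segment (u := (y + z) / 2) (v := (z + x) / 2) hm hz
      (by rw [segment_eq_Icc (by linarith)]; constructor <;> linarith)
      (by rw [segment_eq_Icc (by linarith)]; constructor <;> linarith) (by ring)
    linarith [hg.map_midpoint_le hx hy]
  · have hchord := hg.add_le_of_mem_segment (u := (x + y) / 2) (v := (z + x) / 2) hm hx
      (by rw [segment_symm, segment_eq_Icc (by linarith)]; constructor <;> linarith)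
      (by rw [segment_symm, segment_eq_Icc (by linarith)]; constructor <;> linarith) (by ring)
    linarith [hg.map_midpoint_le hy hz]

/-- **Popoviciu's inequality** for convex functions. -/
theorem ConvexOn.popoviciu {s : Set ℝ} {g : ℝ → ℝ} (hg : ConvexOn ℝ s g)
    {x y z : ℝ} (hx : x ∈ s) (hy : y ∈ s) (hz : z ∈ s) :
    2 * (g ((x + y) / 2) + g ((y + z) / 2) + g ((z + x) / 2)) ≤
      g x + g y + g z + 3 * g ((x + y + z) / 3) := by
  wlog hxy : x ≤ y generalizing x y
  · have h := this hy hx (by linarith)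
    rw [add_comm y x, add_comm x z, add_comm z y] at h
    linarith
  rcases le_total y z with hyz | hzy
  · exact hg.popoviciu_of_le hx hz hxy hyz
  rcases le_total x z with hxz | hzx
  · have h := hg.popoviciu_of_le hx hy hxz hzy
    rw [add_right_comm x z y, add_comm x z, add_comm z y, add_comm y x] at h
    linarith
  · have h := hg.popoviciu_of_le hz hy hzx hxy
    rw [show z + x + y = x + y + z by ring] at h
    linarith

/-- Popoviciu's inequality for strongly convex functions with modulus `C > 0`. -/
theorem popoviciu_strongly_convex (a b C : ℝ) (hC : 0 < C) (f : ℝ → ℝ)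
    (hf : ConvexOn ℝ (Set.Icc a b) (fun x => f x - (C / 2) * x ^ 2)) :
    ∀ x ∈ Set.Icc a b, ∀ y ∈ Set.Icc a b, ∀ z ∈ Set.Icc a b,
      (f x + f y + f z) / 3 + f ((x + y + z) / 3) -
          (2 / 3) * (f ((x + y) / 2) + f ((y + z) / 2) + f ((z + x) / 2)) ≥
        (C / 36) * ((x - y) ^ 2 + (y - z) ^ 2 + (z - x) ^ 2) := by
  intro x hx y hy z hz
  have h := hf.popoviciu hx hy hz
  linarith
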